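/- For every n > 0 there exists a Σ_{n+1}-sentence φ of HyperLTL that is not equivalent to any Σ_n-sentence of HyperLTL, and such that every model T of φ is a finite set of traces with T ⊆ (2^AP)*·∅^ω, i.e. every trace in T is eventually constantly equal to the empty set. -/

import Mathlib

/-! ### HyperLTL: syntax and semantics -/

/-- A trace over a set `AP` of atomic propositions. -/
abbrev Trace (AP : Type) : Type := ℕ → Set AP

/-- The suffix of a trace from position `j` onwards. -/
def Trace.shift {AP : Type} (t : Trace AP) (j : ℕ) : Trace AP := fun i => t (i + j)

/-- Quantifier-free HyperLTL formulas; trace variables are natural numbers. -/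
inductive QF (AP : Type) : Type where
  | atom : AP → ℕ → QF AP
  | neg  : QF AP → QF AP
  | disj : QF AP → QF AP → QF AP
  | next : QF AP → QF AP
  | untl : QF AP → QF AP → QF AP

/-- HyperLTL formulas: a block of trace quantifiers followed by a
quantifier-free formula (HyperLTL formulas are in prenex normal form). -/
inductive HFormula (AP : Type) : Type where
  | ex  : ℕ → HFormula AP → HFormula AP
  | all : ℕ → HFormula AP → HFormula AP
  | qf  : QF AP → HFormula AP

/-- The simultaneous shift of a trace assignment. -/
def shiftAsg {AP : Type} (As : ℕ → Trace AP) (j : ℕ) : ℕ → Trace AP :=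
  fun x => Trace.shift (As x) j

/-- Semantics of quantifier-free HyperLTL formulas w.r.t. a trace assignment. -/
def QF.sat {AP : Type} : QF AP → (ℕ → Trace AP) → Prop
  | .atom a x, As => a ∈ As x 0
  | .neg ψ, As => ¬ ψ.sat As
  | .disj ψ₁ ψ₂, As => ψ₁.sat As ∨ ψ₂.sat As
  | .next ψ, As => ψ.sat (shiftAsg As 1)
  | .untl ψ₁ ψ₂, As => ∃ j, ψ₂.sat (shiftAsg As j) ∧ ∀ j' < j, ψ₁.sat (shiftAsg As j')

/-- Semantics of HyperLTL formulas w.r.t. a set of traces and a trace assignment. -/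
def HFormula.sat {AP : Type} : HFormula AP → Set (Trace AP) → (ℕ → Trace AP) → Prop
  | .ex x φ, T, As => ∃ t ∈ T, φ.sat T (Function.update As x t)
  | .all x φ, T, As => ∀ t ∈ T, φ.sat T (Function.update As x t)
  | .qf ψ, _, As => ψ.sat As

def QF.freeVars {AP : Type} : QF AP → Set ℕ
  | .atom _ x => {x}
  | .neg ψ => ψ.freeVars
  | .disj ψ₁ ψ₂ => ψ₁.freeVars ∪ ψ₂.freeVars
  | .next ψ => ψ.freeVars
  | .untl ψ₁ ψ₂ => ψ₁.freeVars ∪ ψ₂.freeVars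

def HFormula.freeVars {AP : Type} : HFormula AP → Set ℕ
  | .ex x φ => φ.freeVars \ {x}
  | .all x φ => φ.freeVars \ {x}
  | .qf ψ => ψ.freeVars

/-- A sentence is a formula without free variables. -/
def HFormula.IsSentence {AP : Type} (φ : HFormula AP) : Prop := φ.freeVars = ∅

/-- `T` is a model of `φ` (for sentences the initial assignment is irrelevant). -/
def HModels {AP : Type} (T : Set (Trace AP)) (φ : HFormula AP) : Prop :=
  φ.sat T (fun _ _ => ∅)

/-- A HyperLTL sentence is satisfiable if it has a model. -/
def HSatisfiable {AP : Type} (φ : HFormula AP) : Prop := ∃ T, HModels T φ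

/-! ### The quantifier alternation hierarchy -/

/-- The quantifier prefix of a (prenex) HyperLTL formula: `true` stands for an
existential quantifier, `false` for a universal one. -/
def HFormula.prefixList {AP : Type} : HFormula AP → List Bool
  | .ex _ φ => true :: φ.prefixList
  | .all _ φ => false :: φ.prefixList
  | .qf _ => []

/-- `AltPrefix n b l` holds if `l` consists of at most `n` alternating blocks of
quantifiers, the first block consisting of quantifiers of kind `b`
(blocks may be empty). -/
def AltPrefix : ℕ → Bool → List Bool → Prop
  | 0, _, l => l = []
  | n+1, b, l => ∃ l₁ l₂, l = l₁ ++ l₂ ∧ (∀ c ∈ l₁, c = b) ∧ AltPrefix n (!b) l₂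

/-- A Σₙ-prefix: at most `n` alternating blocks, beginning with an existential block. -/
def SigPrefix (n : ℕ) (l : List Bool) : Prop := AltPrefix n true l

/-- A Σₙ-sentence of HyperLTL. -/
def IsSigmaSentence {AP : Type} (n : ℕ) (φ : HFormula AP) : Prop :=
  φ.IsSentence ∧ SigPrefix n φ.prefixList

/-!
A word `w` over `ℕ` is coded by a finite set of traces, one per position: the letter `c` at position
`i` becomes the trace in which a proposition `p` holds exactly at the times `D * (i + 1), …,
D * (i + 1) + c`. If `D` exceeds the nesting depth of `X` in a quantifier-free formula, then the
formula is invariant under stuttering the gaps between these blocks, so it sees the letters of the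
assigned traces and the order of their positions only. On coded words a HyperLTL sentence therefore
behaves like a first-order sentence with the same quantifier prefix, and Ehrenfeucht–Fraïssé games
apply.

The alternation hierarchy of first-order logic on words is strict: the property that some factor
between two letters `m + 1` fails the property of level `m` costs one more alternation per level,
while a power `U ^ N` and `U ^ N * V * U ^ N` cannot be told apart by a given prefix for large `N`
when the residual prefix, once its first block is used up, leads from `U` to `V`. HyperLTL expresses
these properties on coded words with the expected prefix. The leading existential block has room for
one more trace, which is required to be eventually empty and to last as long as every other trace,
and this makes all models finite.
-/

/-! ### Words and the back-and-forth preorder -/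

section Words

variable {α : Type*}

theorem append_eq_append_cons_iff {u u' x₁ x₂ : List α} {c : α} :
    u ++ u' = x₁ ++ c :: x₂ ↔
      (∃ y, u = x₁ ++ c :: y ∧ x₂ = y ++ u') ∨ ∃ y, u' = y ++ c :: x₂ ∧ x₁ = u ++ y := by
  constructor
  · intro h
    rcases List.append_eq_append_iff.1 h with ⟨y, hx₁, hu'⟩ | ⟨_ | ⟨d, y⟩, hu, hx₂⟩
    · exact .inr ⟨y, hu', hx₁⟩
    · exact .inr ⟨[], by simpa using hx₂.symm, by simpa using hu.symm⟩
    · obtain ⟨rfl, rfl⟩ := List.cons.inj hx₂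
      exact .inl ⟨y, hu, rfl⟩
  · rintro (⟨y, rfl, rfl⟩ | ⟨y, rfl, rfl⟩) <;> simp

/-- The power `U ^ c` of a word `U`. -/
def wordPow (U : List α) (c : ℕ) : List α := (List.replicate c U).flatten

@[simp]
theorem wordPow_zero (U : List α) : wordPow U 0 = [] := rfl

theorem wordPow_succ (U : List α) (c : ℕ) : wordPow U (c + 1) = U ++ wordPow U c := rfl

theorem wordPow_one (U : List α) : wordPow U 1 = U := List.append_nil U

theorem wordPow_add (U : List α) (a b : ℕ) : wordPow U (a + b) = wordPow U a ++ wordPow U b := by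
  simp only [wordPow, List.replicate_add, List.flatten_append]

theorem mem_of_mem_wordPow {U : List α} {c : ℕ} {x : α} (hx : x ∈ wordPow U c) : x ∈ U := by
  obtain ⟨_, hV, hx⟩ := List.mem_flatten.1 hx
  rwa [List.eq_of_mem_replicate hV] at hx

theorem wordPow_eq_append_cons {U x₁ x₂ : List α} {c : ℕ} {x : α}
    (h : wordPow U c = x₁ ++ x :: x₂) :
    ∃ c₁ c₂ u₁ u₂, U = u₁ ++ x :: u₂ ∧ c = c₁ + 1 + c₂ ∧
      x₁ = wordPow U c₁ ++ u₁ ∧ x₂ = u₂ ++ wordPow U c₂ := by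
  induction c generalizing x₁ with
  | zero => simp at h
  | succ c ih =>
    rw [wordPow_succ, append_eq_append_cons_iff] at h
    rcases h with ⟨y, hU, hx₂⟩ | ⟨y, hc, hx₁⟩
    · exact ⟨0, c, x₁, y, hU, by omega, by simp, hx₂⟩
    · obtain ⟨c₁, c₂, u₁, u₂, hU, hc, hy, hx₂⟩ := ih hc
      exact ⟨c₁ + 1, c₂, u₁, u₂, hU, by omega, by simp [hx₁, hy, wordPow_succ], hx₂⟩

theorem wordPow_add_one_add {U u₁ u₂ : List α} {x : α} (hU : U = u₁ ++ x :: u₂) (c₁ c₂ : ℕ) :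
    wordPow U (c₁ + 1 + c₂) = (wordPow U c₁ ++ u₁) ++ x :: (u₂ ++ wordPow U c₂) := by
  rw [wordPow_add, wordPow_add, wordPow_one]
  nth_rewrite 2 [hU]
  simp

/-- A preorder on words compatible with concatenation. -/
structure IsPrecongruence (R : List α → List α → Prop) : Prop where
  refl (u : List α) : R u u
  trans {u v w : List α} : R u v → R v w → R u w
  append {u v u' v' : List α} : R u v → R u' v' → R (u ++ u') (v ++ v')

theorem IsPrecongruence.flip {R : List α → List α → Prop} (hR : IsPrecongruence R) :
    IsPrecongruence (flip R) where
  refl := hR.refl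
  trans huv hvw := hR.trans hvw huv
  append huv huv' := hR.append huv huv'

/-- The *forth* condition of the Ehrenfeucht–Fraïssé game: every factorisation of `u` around one
of its letters is answered by a factorisation of `v` around the same letter, with `R`-related
left and right parts. -/
def SplitForth (R : List α → List α → Prop) (u v : List α) : Prop :=
  ∀ ⦃x₁ c x₂⦄, u = x₁ ++ c :: x₂ → ∃ y₁ y₂, v = y₁ ++ c :: y₂ ∧ R x₁ y₁ ∧ R x₂ y₂

/-- The refinement of `R` by one round of the game in which the letter is chosen in the left
word. -/
def ForthStep (R : List α → List α → Prop) (u v : List α) : Prop := R u v ∧ SplitForth R u v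

theorem IsPrecongruence.forthStep {R : List α → List α → Prop} (hR : IsPrecongruence R) :
    IsPrecongruence (ForthStep R) where
  refl u := ⟨hR.refl u, fun x₁ _ x₂ h => ⟨x₁, x₂, h, hR.refl x₁, hR.refl x₂⟩⟩
  trans := by
    rintro u v w ⟨huv, suv⟩ ⟨hvw, svw⟩
    refine ⟨hR.trans huv hvw, fun x₁ c x₂ hu => ?_⟩
    obtain ⟨y₁, y₂, hv, hxy₁, hxy₂⟩ := suv hu
    obtain ⟨z₁, z₂, hw, hyz₁, hyz₂⟩ := svw hv
    exact ⟨z₁, z₂, hw, hR.trans hxy₁ hyz₁, hR.trans hxy₂ hyz₂⟩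
  append := by
    rintro u v u' v' ⟨huv, suv⟩ ⟨huv', suv'⟩
    refine ⟨hR.append huv huv', fun x₁ c x₂ h => ?_⟩
    rcases append_eq_append_cons_iff.1 h with ⟨y, hu, rfl⟩ | ⟨y, hu', rfl⟩
    · obtain ⟨y₁, y₂, rfl, h₁, h₂⟩ := suv hu
      exact ⟨y₁, y₂ ++ v', by simp, h₁, hR.append h₂ huv'⟩
    · obtain ⟨y₁, y₂, rfl, h₁, h₂⟩ := suv' hu'
      exact ⟨v ++ y₁, y₂, by simp, hR.append huv h₁, h₂⟩

/-- The back-and-forth preorder of a quantifier prefix: `PrefixLE l u v` says that the existential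
player wins the Ehrenfeucht–Fraïssé game on `(u, v)` whose rounds follow `l`, a letter being
chosen in `u` when the quantifier is existential (`true`) and in `v` when it is universal. Hence
first-order sentences with prefix `l` that hold in `u` also hold in `v`. -/
def PrefixLE : List Bool → List α → List α → Prop
  | [] => fun _ _ => True
  | true :: l => ForthStep (PrefixLE l)
  | false :: l => flip (ForthStep (flip (PrefixLE l)))

theorem PrefixLE.isPrecongruence (l : List Bool) : IsPrecongruence (PrefixLE (α := α) l) := by
  induction l with
  | nil => exact ⟨fun _ => trivial, fun _ _ => trivial, fun _ _ => trivial⟩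
  | cons b l ih =>
    cases b
    · exact ih.flip.forthStep.flip
    · exact ih.forthStep

theorem PrefixLE.refl (l : List Bool) (u : List α) : PrefixLE l u u :=
  (PrefixLE.isPrecongruence l).refl u

theorem PrefixLE.append {l : List Bool} {u v u' v' : List α} (h : PrefixLE l u v)
    (h' : PrefixLE l u' v') : PrefixLE l (u ++ u') (v ++ v') :=
  (PrefixLE.isPrecongruence l).append h h'

theorem prefixLE_map_not (l : List Bool) : PrefixLE (α := α) (l.map not) = flip (PrefixLE l) := by
  induction l with
  | nil => rfl
  | cons b l ih => cases b <;> simp only [List.map_cons, PrefixLE, Bool.not_true, Bool.not_false,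
      ih] <;> rfl

theorem prefixLE_replicate_true_nil_left (k : ℕ) (v : List α) :
    PrefixLE (List.replicate k true) [] v := by
  induction k with
  | zero => trivial
  | succ k ih => exact ⟨ih, fun x₁ c x₂ h => by simp at h⟩

/-! ### Powers under the back-and-forth preorder -/

theorem exists_eq_add_one_add_of_three_mul_le {X c' c₁ c₂ : ℕ} (hX : 1 ≤ X)
    (hc : 3 * X ≤ c₁ + 1 + c₂) (hc' : 3 * X ≤ c') :
    ∃ d₁ d₂, c' = d₁ + 1 + d₂ ∧ (c₁ = d₁ ∨ X ≤ c₁ ∧ X ≤ d₁) ∧ (c₂ = d₂ ∨ X ≤ c₂ ∧ X ≤ d₂) := by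
  by_cases h₁ : c₁ < X
  · exact ⟨c₁, c' - 1 - c₁, by omega, by omega, by omega⟩
  by_cases h₂ : c₂ < X
  · exact ⟨c' - 1 - c₂, c₂, by omega, by omega, by omega⟩
  · exact ⟨X, c' - 1 - X, by omega, by omega, by omega⟩

theorem IsPrecongruence.splitForth_wordPow {R : List α → List α → Prop} (hR : IsPrecongruence R)
    {U : List α} {X c c' : ℕ} (hX : 1 ≤ X)
    (hU : ∀ {a b}, X ≤ a → X ≤ b → R (wordPow U a) (wordPow U b))
    (hc : 3 * X ≤ c) (hc' : 3 * X ≤ c') : SplitForth R (wordPow U c) (wordPow U c') := by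
  intro x₁ x x₂ h
  obtain ⟨c₁, c₂, u₁, u₂, hu, rfl, rfl, rfl⟩ := wordPow_eq_append_cons h
  obtain ⟨d₁, d₂, rfl, h₁, h₂⟩ := exists_eq_add_one_add_of_three_mul_le hX hc hc'
  have rel {a b : ℕ} : a = b ∨ X ≤ a ∧ X ≤ b → R (wordPow U a) (wordPow U b) := by
    rintro (rfl | ⟨ha, hb⟩)
    exacts [hR.refl _, hU ha hb]
  exact ⟨_, _, wordPow_add_one_add hu d₁ d₂, hR.append (rel h₁) (hR.refl _),
    hR.append (hR.refl _) (rel h₂)⟩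

theorem prefixLE_wordPow (U : List α) (l : List Bool) {c c' : ℕ} (hc : 3 ^ l.length ≤ c)
    (hc' : 3 ^ l.length ≤ c') : PrefixLE l (wordPow U c) (wordPow U c') := by
  induction l generalizing c c' with
  | nil => trivial
  | cons b l ih =>
    have hX : 1 ≤ 3 ^ l.length := Nat.one_le_pow _ _ (by norm_num)
    rw [List.length_cons, pow_succ'] at hc hc'
    have hR := PrefixLE.isPrecongruence (α := α) l
    cases b
    · exact ⟨ih (by omega) (by omega),
        hR.flip.splitForth_wordPow hX (fun ha hb => ih hb ha) hc' hc⟩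
    · exact ⟨ih (by omega) (by omega), hR.splitForth_wordPow hX ih hc hc'⟩

/-- A letter picked in a large power of `U` has a large power on one of its sides, which absorbs
the insertion of `V`; the exponent on its other side is truncated at `M`. -/
theorem IsPrecongruence.splitForth_wordPow_insert {R : List α → List α → Prop}
    (hR : IsPrecongruence R) {U V : List α} {M K : ℕ} (hMK : M < K)
    (htrunc : ∀ k, R (wordPow U k) (wordPow U (min k M)))
    (hins : ∀ {a b c}, K ≤ a → K ≤ b → K ≤ c →
      R (wordPow U c) (wordPow U a ++ (V ++ wordPow U b)))
    {a b c : ℕ} (ha : 2 * K ≤ a) (hb : 2 * K ≤ b) (hc : 2 * K ≤ c) :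
    SplitForth R (wordPow U c) (wordPow U a ++ (V ++ wordPow U b)) := by
  intro x₁ x x₂ h
  obtain ⟨c₁, c₂, u₁, u₂, hu, rfl, rfl, rfl⟩ := wordPow_eq_append_cons h
  by_cases hc₂ : K ≤ c₂
  · obtain ⟨a', rfl⟩ := Nat.exists_eq_add_of_le (show min c₁ M + 1 ≤ a by omega)
    refine ⟨wordPow U (min c₁ M) ++ u₁, u₂ ++ (wordPow U a' ++ (V ++ wordPow U b)), ?_,
      hR.append (htrunc _) (hR.refl _),
      hR.append (hR.refl _) (hins (by omega) (by omega) hc₂)⟩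
    simp [wordPow_add_one_add hu]
  · obtain ⟨b', rfl⟩ := Nat.exists_eq_add_of_le (show min c₂ M + 1 ≤ b by omega)
    refine ⟨(wordPow U a ++ (V ++ wordPow U b')) ++ u₁, u₂ ++ wordPow U (min c₂ M), ?_,
      hR.append (hins (by omega) (by omega) (by omega)) (hR.refl _),
      hR.append (hR.refl _) (htrunc _)⟩
    rw [show min c₂ M + 1 + b' = b' + 1 + min c₂ M by omega, wordPow_add_one_add hu]
    simp

theorem prefixLE_wordPow_insert {U V : List α} {l : List Bool} (hUV : PrefixLE l U V) {R j : ℕ}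
    (hj : j + l.length ≤ R) {a b c : ℕ} (ha : (3 ^ R + 1) * 2 ^ j ≤ a)
    (hb : (3 ^ R + 1) * 2 ^ j ≤ b) (hc : (3 ^ R + 1) * 2 ^ j ≤ c) :
    PrefixLE (List.replicate j true ++ l) (wordPow U c)
      (wordPow U a ++ (V ++ wordPow U b)) := by
  have hpow {i : ℕ} (hi : i ≤ R) : 3 ^ i ≤ 3 ^ R := Nat.pow_le_pow_right (by norm_num) hi
  induction j generalizing a b c with
  | zero =>
    rw [pow_zero, mul_one] at ha hb hc
    have hl : 3 ^ l.length ≤ 3 ^ R := hpow (by omega)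
    have hpad : PrefixLE l (wordPow U c) (wordPow U (a + 1 + b)) :=
      prefixLE_wordPow U l (by omega) (by omega)
    rw [wordPow_add, wordPow_add, wordPow_one, List.append_assoc] at hpad
    exact (PrefixLE.isPrecongruence l).trans hpad (.append (.refl l _) (hUV.append (.refl l _)))
  | succ j ih =>
    have hK : 3 ^ R < (3 ^ R + 1) * 2 ^ j :=
      Nat.lt_of_lt_of_le (Nat.lt_succ_self _) (Nat.le_mul_of_pos_right _ (by positivity))
    rw [pow_succ, ← mul_assoc, mul_comm _ 2] at ha hb hc
    have htrunc (k : ℕ) :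
        PrefixLE (List.replicate j true ++ l) (wordPow U k) (wordPow U (min k (3 ^ R))) := by
      have hlen : 3 ^ (List.replicate j true ++ l).length ≤ 3 ^ R := hpow (by
        rw [List.length_append, List.length_replicate]; omega)
      rcases le_total k (3 ^ R) with hk | hk
      · rw [min_eq_left hk]
        exact .refl _ _
      · rw [min_eq_right hk]
        exact prefixLE_wordPow _ _ (by omega) hlen
    exact ⟨ih (by omega) (by omega) (by omega) (by omega),
      (PrefixLE.isPrecongruence _).splitForth_wordPow_insert hK htrunc
        (ih (by omega)) ha hb hc⟩

end Words

/-! ### Alternation prefixes -/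

namespace AltPrefix

theorem cons {n : ℕ} {b : Bool} {l : List Bool} (h : AltPrefix (n + 1) b l) :
    AltPrefix (n + 1) b (b :: l) := by
  obtain ⟨l₁, l₂, rfl, h₁, h₂⟩ := h
  exact ⟨b :: l₁, l₂, rfl, by simpa using h₁, h₂⟩

theorem of_not {n : ℕ} {b : Bool} {l : List Bool} (h : AltPrefix n (!b) l) :
    AltPrefix (n + 1) b l :=
  ⟨[], l, rfl, by simp, h⟩

theorem map_not {n : ℕ} {b : Bool} {l : List Bool} (h : AltPrefix n b l) :
    AltPrefix n (!b) (l.map not) := by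
  induction n generalizing b l with
  | zero => exact List.map_eq_nil_iff.2 h
  | succ n ih =>
    obtain ⟨l₁, l₂, rfl, h₁, h₂⟩ := h
    exact ⟨l₁.map not, l₂.map not, List.map_append,
      List.forall_mem_map.2 fun c hc => congrArg not (h₁ c hc), ih h₂⟩

end AltPrefix

/-! ### Bracket words -/

/-- The alternating property separating the levels of the hierarchy. At level `0` the letter `0`
occurs; at level `m + 1` the letter `m + 1` acts as a bracket, and some factor between two of its
occurrences fails the property of level `m`. -/
def Bracketed : ℕ → List ℕ → Prop
  | 0, u => 0 ∈ u
  | m + 1, u => ∃ u₁ u₂ u₃, u = u₁ ++ (m + 1) :: (u₂ ++ (m + 1) :: u₃) ∧ ¬ Bracketed m u₂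

theorem Bracketed.append_right {m : ℕ} {u : List ℕ} (h : Bracketed m u) (v : List ℕ) :
    Bracketed m (u ++ v) := by
  cases m with
  | zero => exact List.mem_append_left v h
  | succ m =>
    obtain ⟨u₁, u₂, u₃, rfl, h⟩ := h
    exact ⟨u₁, u₂, u₃ ++ v, by simp, h⟩

/-- The words `bracketWord N true m` and `bracketWord N false m` satisfy, respectively violate,
`Bracketed m`, but for large `N` no `m + 1` quantifier blocks starting with an existential one
distinguish the second from the first: `N` copies of the block of the satisfying word hide a
single violating block. -/
def bracketWord (N : ℕ) : Bool → ℕ → List ℕ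
  | true, 0 => [0]
  | false, 0 => []
  | true, m + 1 =>
    wordPow ((m + 1) :: bracketWord N true m) N ++ ((m + 1) :: bracketWord N false m ++
      wordPow ((m + 1) :: bracketWord N true m) N) ++ [m + 1]
  | false, m + 1 => wordPow ((m + 1) :: bracketWord N true m) N ++ [m + 1]

theorem le_of_mem_bracketWord {N m x : ℕ} {b : Bool} (hx : x ∈ bracketWord N b m) : x ≤ m := by
  induction m generalizing b with
  | zero => cases b <;> simp_all [bracketWord]
  | succ m ih =>
    have hcons {b : Bool} (hx : x ∈ (m + 1) :: bracketWord N b m) : x ≤ m + 1 := by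
      rcases List.mem_cons.1 hx with rfl | hx
      exacts [le_rfl, (ih hx).trans m.le_succ]
    cases b <;> simp only [bracketWord, List.mem_append, List.mem_singleton] at hx
    · rcases hx with hx | rfl
      exacts [hcons (mem_of_mem_wordPow hx), le_rfl]
    · rcases hx with (hx | hx | hx) | rfl
      exacts [hcons (mem_of_mem_wordPow hx), hcons hx, hcons (mem_of_mem_wordPow hx), le_rfl]

theorem exists_eq_append_of_wordPow_cons_eq {α : Type*} {s : α} {A u₁ u₂ u₃ : List α} (hs : s ∉ A)
    {c : ℕ} (h : wordPow (s :: A) c ++ [s] = u₁ ++ s :: (u₂ ++ s :: u₃)) :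
    ∃ x, u₂ = A ++ x := by
  induction c generalizing u₁ with
  | zero =>
    have := congrArg List.length h
    simp only [wordPow_zero, List.length_append, List.length_cons, List.length_nil] at this
    omega
  | succ c ih =>
    have not_before {v y : List α} (hA : A = v ++ s :: y) : False := hs (by simp [hA])
    cases u₁ with
    | nil =>
      simp only [wordPow_succ, List.cons_append, List.nil_append, List.cons.injEq, true_and,
        List.append_assoc] at h
      rcases append_eq_append_cons_iff.1 h with ⟨y, hA, -⟩ | ⟨y, -, hu₂⟩
      exacts [(not_before hA).elim, ⟨y, hu₂⟩]
    | cons d u₁ =>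
      simp only [wordPow_succ, List.cons_append, List.cons.injEq, List.append_assoc] at h
      rcases append_eq_append_cons_iff.1 h.2 with ⟨y, hA, -⟩ | ⟨y, hc, -⟩
      exacts [(not_before hA).elim, ih hc]

theorem not_bracketed_wordPow {m : ℕ} {A : List ℕ} (hA : Bracketed m A) (hmA : m + 1 ∉ A) (c : ℕ) :
    ¬ Bracketed (m + 1) (wordPow ((m + 1) :: A) c ++ [m + 1]) := by
  rintro ⟨u₁, u₂, u₃, h, hu₂⟩
  obtain ⟨x, rfl⟩ := exists_eq_append_of_wordPow_cons_eq hmA h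
  exact hu₂ (hA.append_right x)

theorem succ_notMem_bracketWord (N : ℕ) (b : Bool) (m : ℕ) : m + 1 ∉ bracketWord N b m :=
  fun h => Nat.not_succ_le_self m (le_of_mem_bracketWord h)

theorem exists_wordPow_cons_append_singleton {α : Type*} (s : α) (A : List α) (c : ℕ) :
    ∃ x, wordPow (s :: A) c ++ [s] = s :: x := by
  cases c with
  | zero => exact ⟨[], rfl⟩
  | succ c => exact ⟨_, rfl⟩

theorem bracketed_bracketWord_iff (N : ℕ) (b : Bool) (m : ℕ) :
    Bracketed m (bracketWord N b m) ↔ b = true := by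
  induction m generalizing b with
  | zero => cases b <;> simp [bracketWord, Bracketed]
  | succ m ih =>
    cases b
    · exact iff_of_false
        (not_bracketed_wordPow ((ih true).2 rfl) (succ_notMem_bracketWord N true m) N) (by simp)
    · obtain ⟨x, hx⟩ :=
        exists_wordPow_cons_append_singleton (m + 1) (bracketWord N true m) N
      refine iff_of_true ⟨wordPow ((m + 1) :: bracketWord N true m) N, bracketWord N false m, x,
        ?_, by simp [ih]⟩ rfl
      rw [← hx]
      simp [bracketWord]

theorem bracketed_frame_bracketWord_iff (N : ℕ) (b : Bool) (m : ℕ) :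
    Bracketed (m + 1) ((m + 1) :: (bracketWord N b m ++ [m + 1])) ↔ b = false := by
  cases b
  · exact iff_of_true ⟨[], bracketWord N false m, [], rfl, by simp [bracketed_bracketWord_iff]⟩ rfl
  · have h := not_bracketed_wordPow ((bracketed_bracketWord_iff N true m).2 rfl)
      (succ_notMem_bracketWord N true m) 1
    rw [wordPow_one] at h
    exact iff_of_false h (by simp)

theorem prefixLE_bracketWord {N R m : ℕ} {l : List Bool} (h : AltPrefix (m + 1) true l)
    (hR : l.length ≤ R) (hN : (3 ^ R + 1) * 2 ^ R ≤ N) :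
    PrefixLE l (bracketWord N false m) (bracketWord N true m) := by
  induction m generalizing l with
  | zero =>
    obtain ⟨l₁, l₂, rfl, h₁, rfl : l₂ = []⟩ := h
    rw [List.append_nil, List.eq_replicate_of_mem h₁]
    exact prefixLE_replicate_true_nil_left _ _
  | succ m ih =>
    obtain ⟨l₁, l₂, rfl, h₁, h₂⟩ := h
    rw [List.length_append] at hR
    rw [List.eq_replicate_of_mem h₁]
    have hflip : PrefixLE (l₂.map not) (bracketWord N false m) (bracketWord N true m) :=
      ih h₂.map_not (by rw [List.length_map]; omega)
    rw [prefixLE_map_not] at hflip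
    have hblock :
        PrefixLE l₂ ((m + 1) :: bracketWord N true m) ((m + 1) :: bracketWord N false m) :=
      PrefixLE.append (.refl l₂ [m + 1]) hflip
    have hexp : (3 ^ R + 1) * 2 ^ l₁.length ≤ N :=
      (Nat.mul_le_mul_left _ (Nat.pow_le_pow_right (by norm_num) (by omega))).trans hN
    exact (prefixLE_wordPow_insert hblock hR hexp hexp hexp).append (.refl _ _)

/-! ### Matchings of word positions -/

/-- `WordMatching R w w' P`: the pairs in `P` match positions of `w` with positions of `w'` in an
order- and letter-preserving way, such that the factors left between consecutive matched positions
are `R`-related. -/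
inductive WordMatching {α : Type*} (R : List α → List α → Prop) :
    List α → List α → Set (ℕ × ℕ) → Prop
  | gap {w w' : List α} : R w w' → WordMatching R w w' ∅
  | join {w₁ w₂ w₁' w₂' : List α} {P₁ P₂ : Set (ℕ × ℕ)} (c : α) :
      WordMatching R w₁ w₁' P₁ → WordMatching R w₂ w₂' P₂ →
      WordMatching R (w₁ ++ c :: w₂) (w₁' ++ c :: w₂')
        (insert (w₁.length, w₁'.length)
          (P₁ ∪ Prod.map (w₁.length + 1 + ·) (w₁'.length + 1 + ·) '' P₂))

namespace WordMatching

variable {α : Type*} {R : List α → List α → Prop} {w w' : List α} {P : Set (ℕ × ℕ)}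

theorem mono {R' : List α → List α → Prop} (hR : ∀ {u v}, R u v → R' u v)
    (h : WordMatching R w w' P) : WordMatching R' w w' P := by
  induction h with
  | gap h => exact .gap (hR h)
  | join c _ _ ih₁ ih₂ => exact .join c ih₁ ih₂

theorem swap (h : WordMatching R w w' P) : WordMatching (flip R) w' w (Prod.swap '' P) := by
  induction h with
  | gap h => exact (Set.image_empty Prod.swap).symm ▸ .gap h
  | join c _ _ ih₁ ih₂ =>
    convert WordMatching.join c ih₁ ih₂ using 1
    simp only [Set.image_insert_eq, Set.image_union, Set.image_image]
    rfl

theorem lt_length (h : WordMatching R w w' P) {q : ℕ × ℕ} (hq : q ∈ P) :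
    q.1 < w.length ∧ q.2 < w'.length := by
  induction h generalizing q with
  | gap => exact hq.elim
  | join c _ _ ih₁ ih₂ =>
    simp only [List.length_append, List.length_cons]
    obtain rfl | hq | ⟨r, hr, rfl⟩ := hq
    · simp
    · have := ih₁ hq
      omega
    · have := ih₂ hr
      simp only [Prod.map_fst, Prod.map_snd]
      omega

theorem lt_iff_lt (h : WordMatching R w w' P) {q r : ℕ × ℕ} (hq : q ∈ P) (hr : r ∈ P) :
    q.1 < r.1 ↔ q.2 < r.2 := by
  induction h generalizing q r with
  | gap => exact hq.elim
  | join _ h₁ _ ih₁ ih₂ =>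
    obtain rfl | hq | ⟨q, hq, rfl⟩ := hq <;> obtain rfl | hr | ⟨r, hr, rfl⟩ := hr
    · simp
    · have := h₁.lt_length hr
      dsimp only
      omega
    · simp only [Prod.map_fst, Prod.map_snd]
      omega
    · have := h₁.lt_length hq
      dsimp only
      omega
    · exact ih₁ hq hr
    · have := h₁.lt_length hq
      simp only [Prod.map_fst, Prod.map_snd]
      omega
    · simp only [Prod.map_fst, Prod.map_snd]
      omega
    · have := h₁.lt_length hr
      simp only [Prod.map_fst, Prod.map_snd]
      omega
    · have := ih₂ hq hr
      simp only [Prod.map_fst, Prod.map_snd]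
      omega

theorem extend (h : WordMatching (ForthStep R) w w' P) {x y : List α} {c : α}
    (hw : w = x ++ c :: y) :
    ∃ x' y' P', w' = x' ++ c :: y' ∧ P ⊆ P' ∧ (x.length, x'.length) ∈ P' ∧
      WordMatching R w w' P' := by
  induction h generalizing x y with
  | gap h =>
    obtain ⟨x', y', rfl, hx, hy⟩ := h.2 hw
    subst hw
    exact ⟨x', y', _, rfl, Set.empty_subset _, Set.mem_insert _ _, .join c (.gap hx) (.gap hy)⟩
  | @join w₁ w₂ w₁' w₂' P₁ P₂ d h₁ h₂ ih₁ ih₂ =>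
    have coarsen {u v Q} (h : WordMatching (ForthStep R) u v Q) : WordMatching R u v Q :=
      h.mono And.left
    rcases append_eq_append_cons_iff.1 hw with ⟨z, hw₁, -⟩ | ⟨_ | ⟨e, z⟩, hw₂, hx⟩
    · obtain ⟨x', y', P', rfl, hP, hmem, h'⟩ := ih₁ hw₁
      exact ⟨x', y' ++ d :: w₂', _, by simp,
        Set.insert_subset_insert (Set.union_subset_union_left _ hP),
        .inr (.inl hmem), .join d h' (coarsen h₂)⟩
    · obtain ⟨rfl, -⟩ := List.cons.inj hw₂
      rw [List.append_nil] at hx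
      exact ⟨w₁', w₂', _, rfl, subset_rfl, hx ▸ Set.mem_insert _ _,
        .join d (coarsen h₁) (coarsen h₂)⟩
    · obtain ⟨rfl, rfl⟩ := List.cons.inj hw₂
      obtain ⟨x', y', P', rfl, hP, hmem, h'⟩ := ih₂ rfl
      refine ⟨w₁' ++ d :: x', y', _, by simp,
        Set.insert_subset_insert (Set.union_subset_union_right _ (Set.image_mono hP)),
        .inr (.inr ⟨_, hmem, ?_⟩), .join d (coarsen h₁) h'⟩
      simp only [hx, Prod.map_apply, List.length_append, List.length_cons, Prod.mk.injEq]
      omega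

theorem extend_back (h : WordMatching (flip (ForthStep (flip R))) w w' P) {x' y' : List α} {c : α}
    (hw' : w' = x' ++ c :: y') :
    ∃ x y P', w = x ++ c :: y ∧ P ⊆ P' ∧ (x.length, x'.length) ∈ P' ∧ WordMatching R w w' P' := by
  obtain ⟨x, y, P', hw, hP, hmem, h'⟩ := h.swap.extend hw'
  exact ⟨x, y, Prod.swap '' P', hw, fun r hr => ⟨r.swap, hP ⟨r, hr, rfl⟩, r.swap_swap⟩,
    ⟨_, hmem, rfl⟩, h'.swap⟩

end WordMatching

/-! ### Stuttering -/

section Stuttering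

variable {AP : Type}

/-- The order-preserving surjection of `ℕ` onto itself that takes the value `e` twice. -/
def collapse (e i : ℕ) : ℕ := if i ≤ e then i else i - 1

theorem collapse_of_le {e i : ℕ} (h : i ≤ e) : collapse e i = i := if_pos h

theorem collapse_of_lt {e i : ℕ} (h : e < i) : collapse e i = i - 1 := if_neg h.not_ge

theorem monotone_collapse (e : ℕ) : Monotone (collapse e) := fun i j hij => by
  simp only [collapse]
  split_ifs <;> omega

theorem surjective_collapse (e : ℕ) : (collapse e).Surjective := fun j => by
  by_cases hj : j ≤ e
  exacts [⟨j, collapse_of_le hj⟩, ⟨j + 1, collapse_of_lt (by omega)⟩]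

/-- The trace `t` with its letter at position `e` duplicated. -/
def Trace.dup (t : Trace AP) (e : ℕ) : Trace AP := fun i => t (collapse e i)

theorem Trace.dup_shift_one {t : Trace AP} (h : t 1 = t 0) : (t.shift 1).dup 0 = t := by
  funext i
  rcases i with _ | i
  · exact h
  · rfl

theorem shiftAsg_dup_of_le (As : ℕ → Trace AP) {e j : ℕ} (h : j ≤ e) :
    shiftAsg (fun v => (As v).dup e) j = fun v => (shiftAsg As j v).dup (e - j) := by
  funext v i
  simp only [shiftAsg, Trace.shift, Trace.dup]
  by_cases hi : i + j ≤ e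
  · rw [collapse_of_le hi, collapse_of_le (by omega)]
  · rw [collapse_of_lt (by omega), collapse_of_lt (by omega), show i + j - 1 = i - 1 + j by omega]

theorem shiftAsg_dup_of_lt (As : ℕ → Trace AP) {e j : ℕ} (h : e < j) :
    shiftAsg (fun v => (As v).dup e) j = shiftAsg As (j - 1) := by
  funext v i
  simp only [shiftAsg, Trace.shift, Trace.dup]
  rw [collapse_of_lt (by omega), show i + j - 1 = i + (j - 1) by omega]

/-- The nesting depth of the operator `X`. -/
def QF.nextDepth : QF AP → ℕ
  | .atom _ _ => 0
  | .neg ψ => ψ.nextDepth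
  | .disj ψ₁ ψ₂ => max ψ₁.nextDepth ψ₂.nextDepth
  | .next ψ => ψ.nextDepth + 1
  | .untl ψ₁ ψ₂ => max ψ₁.nextDepth ψ₂.nextDepth

theorem exists_until_comp_iff {a b : ℕ → Prop} {f : ℕ → ℕ} (hf : Monotone f)
    (hsurj : f.Surjective) :
    (∃ j, b (f j) ∧ ∀ i < j, a (f i)) ↔ ∃ j, b j ∧ ∀ i < j, a i := by
  constructor
  · rintro ⟨j, hb, ha⟩
    refine ⟨f j, hb, fun i hi => ?_⟩
    obtain ⟨i, rfl⟩ := hsurj i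
    exact ha i (hf.reflect_lt hi)
  · rintro ⟨j, hb, ha⟩
    classical
    refine ⟨Nat.find (hsurj j), by rwa [Nat.find_spec (hsurj j)], fun i hi => ha _ ?_⟩
    exact lt_of_le_of_ne ((hf hi.le).trans_eq (Nat.find_spec (hsurj j))) (Nat.find_min (hsurj j) hi)

theorem QF.sat_dup (ψ : QF AP) {As : ℕ → Trace AP} {e : ℕ}
    (h : ∀ v, ∀ i ≤ ψ.nextDepth, As v (e + i) = As v e) :
    ψ.sat (fun v => (As v).dup e) ↔ ψ.sat As := by
  induction ψ generalizing As e with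
  | atom a x => simp [QF.sat, Trace.dup, collapse]
  | neg ψ ih => exact not_congr (ih h)
  | disj ψ₁ ψ₂ ih₁ ih₂ =>
    exact or_congr (ih₁ fun v i hi => h v i (le_max_of_le_left hi))
      (ih₂ fun v i hi => h v i (le_max_of_le_right hi))
  | next ψ ih =>
    simp only [QF.nextDepth] at h
    simp only [QF.sat]
    rcases e with _ | e
    · simp only [Nat.zero_add] at h
      have hAs (v : ℕ) : (shiftAsg As 1 v).dup 0 = As v :=
        Trace.dup_shift_one (h v 1 (by omega))
      rw [shiftAsg_dup_of_lt _ Nat.zero_lt_one, ← ih (As := shiftAsg As 1) (e := 0)]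
      · simp only [hAs]
        rfl
      · intro v i hi
        rw [shiftAsg, Trace.shift, Trace.shift, Nat.zero_add, Nat.zero_add, h v 1 (by omega),
          h v (i + 1) (by omega)]
    · rw [shiftAsg_dup_of_le _ (Nat.succ_pos e)]
      refine ih fun v i hi => ?_
      simpa [shiftAsg, Trace.shift, Nat.add_right_comm] using h v i (by omega)
  | untl ψ₁ ψ₂ ih₁ ih₂ =>
    have hsat {χ : QF AP} (hχ : χ.nextDepth ≤ (QF.untl ψ₁ ψ₂).nextDepth)
        (ih : ∀ {As : ℕ → Trace AP} {e : ℕ}, (∀ v, ∀ i ≤ χ.nextDepth, As v (e + i) = As v e) →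
          (χ.sat (fun v => (As v).dup e) ↔ χ.sat As)) (j : ℕ) :
        χ.sat (shiftAsg (fun v => (As v).dup e) j) ↔ χ.sat (shiftAsg As (collapse e j)) := by
      rcases le_or_gt j e with hj | hj
      · rw [collapse_of_le hj, shiftAsg_dup_of_le _ hj]
        refine ih fun v i hi => ?_
        simpa [shiftAsg, Trace.shift, Nat.add_right_comm, hj] using h v i (hi.trans hχ)
      · rw [collapse_of_lt hj, shiftAsg_dup_of_lt _ hj]
    simp only [QF.sat, hsat (le_max_left _ _) ih₁, hsat (le_max_right _ _) ih₂]
    exact exists_until_comp_iff (a := fun j => ψ₁.sat (shiftAsg As j))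
      (b := fun j => ψ₂.sat (shiftAsg As j)) (monotone_collapse e) (surjective_collapse e)

/-- The trace in which `p` holds exactly at the positions `s, …, s + c`. -/
def blockTrace (p : AP) (s c : ℕ) : Trace AP := fun i => {q | q = p ∧ s ≤ i ∧ i ≤ s + c}

theorem mem_blockTrace {p q : AP} {s c i : ℕ} :
    q ∈ blockTrace p s c i ↔ q = p ∧ s ≤ i ∧ i ≤ s + c := Iff.rfl

theorem dup_blockTrace_of_lt (p : AP) {s c e : ℕ} (h : s + c < e) :
    (blockTrace p s c).dup e = blockTrace p s c := by
  funext i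
  ext q
  simp only [Trace.dup, collapse]
  split_ifs <;> grind [mem_blockTrace]

theorem dup_blockTrace_of_gt (p : AP) {s c e : ℕ} (h : e < s) :
    (blockTrace p s c).dup e = blockTrace p (s + 1) c := by
  funext i
  ext q
  simp only [Trace.dup, collapse]
  split_ifs <;> grind [mem_blockTrace]

theorem QF.sat_blockTrace_shift (p : AP) (ψ : QF AP) {s lab : ℕ → ℕ} {e : ℕ}
    (h : ∀ v, s v + lab v < e ∨ e + ψ.nextDepth < s v) (k : ℕ) :
    ψ.sat (fun v => blockTrace p (if e < s v then s v + k else s v) (lab v)) ↔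
      ψ.sat (fun v => blockTrace p (s v) (lab v)) := by
  induction k with
  | zero => simp
  | succ k ih =>
    rw [← ih]
    set s' : ℕ → ℕ := fun v => if e < s v then s v + k else s v with hs'
    have h' (v) : s' v + lab v < e ∨ e + ψ.nextDepth < s' v := by
      simp only [hs']
      split_ifs <;> grind
    rw [← ψ.sat_dup (e := e) (As := fun v => blockTrace p (s' v) (lab v))]
    · refine iff_of_eq (congrArg ψ.sat (funext fun v => ?_))
      rcases h v with hv | hv
      · rw [if_neg (by omega), show s' v = s v from if_neg (by omega), dup_blockTrace_of_lt p hv]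
      · rw [if_pos (by omega), show s' v = s v + k from if_pos (by omega),
          dup_blockTrace_of_gt p (by omega), Nat.add_assoc]
    · intro v i hi
      ext q
      simp only [mem_blockTrace]
      grind

/-- The trace coding an occurrence of the letter `c` at position `i` of a word, where `D` is the
distance between the codes of consecutive positions. -/
def posTrace (p : AP) (D i c : ℕ) : Trace AP := blockTrace p (D * (i + 1)) c

theorem QF.sat_posTrace_min_succ (p : AP) (ψ : QF AP) {D Λ : ℕ} (hD : Λ + ψ.nextDepth + 2 ≤ D)
    {X Y lab : ℕ → ℕ} (hlab : ∀ v, lab v ≤ Λ) (hXY : ∀ v w, Y v < Y w → X v < X w) (j : ℕ) :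
    ψ.sat (fun v => posTrace p D (X v + min (Y v) (j + 1)) (lab v)) ↔
      ψ.sat (fun v => posTrace p D (X v + min (Y v) j) (lab v)) := by
  by_cases hY : ∃ v, j < Y v
  · obtain ⟨v₀, hv₀, hmin⟩ := exists_minimalFor_of_wellFoundedLT (fun v => j < Y v) X hY
    have hfirst : D ≤ D * (X v₀ + j + 1) := Nat.le_mul_of_pos_right _ (by omega)
    have hafter {v} (hv : j < Y v) : D * (X v₀ + j + 1) ≤ D * (X v + min (Y v) j + 1) := by
      have : X v₀ ≤ X v := le_of_not_gt fun hlt => hlt.not_ge (hmin hv hlt.le)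
      exact Nat.mul_le_mul_left _ (by omega)
    have hbefore {v} (hv : ¬ j < Y v) :
        D * (X v + min (Y v) j + 1) + D ≤ D * (X v₀ + j + 1) := by
      have : X v < X v₀ := hXY v v₀ (by omega)
      rw [← Nat.mul_succ]
      exact Nat.mul_le_mul_left _ (by omega)
    rw [iff_comm]
    unfold posTrace
    rw [← ψ.sat_blockTrace_shift p (e := D * (X v₀ + j + 1) - (ψ.nextDepth + 1)) _ D]
    · refine iff_of_eq (congrArg ψ.sat (funext fun v => ?_))
      by_cases hv : j < Y v
      · have := hafter hv
        rw [if_pos (by omega), ← Nat.mul_succ, show min (Y v) (j + 1) = min (Y v) j + 1 by omega]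
        rfl
      · have := hbefore hv
        rw [if_neg (by omega), show min (Y v) (j + 1) = min (Y v) j by omega]
    · intro v
      have := hlab v
      by_cases hv : j < Y v
      · have := hafter hv
        omega
      · have := hbefore hv
        omega
  · have hY' (v) : min (Y v) (j + 1) = min (Y v) j := by
      have := not_exists.1 hY v
      omega
    simp only [hY']

theorem QF.sat_posTrace_add (p : AP) (ψ : QF AP) {D Λ : ℕ} (hD : Λ + ψ.nextDepth + 2 ≤ D)
    {X Y lab : ℕ → ℕ} (hlab : ∀ v, lab v ≤ Λ) (hXY : ∀ v w, Y v < Y w → X v < X w)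
    {N : ℕ} (hN : ∀ v, Y v ≤ N) :
    ψ.sat (fun v => posTrace p D (X v + Y v) (lab v)) ↔
      ψ.sat (fun v => posTrace p D (X v) (lab v)) := by
  have hstages (j : ℕ) : ψ.sat (fun v => posTrace p D (X v + min (Y v) j) (lab v)) ↔
      ψ.sat (fun v => posTrace p D (X v) (lab v)) := by
    induction j with
    | zero => simp
    | succ j ih => rw [ψ.sat_posTrace_min_succ p hD hlab hXY, ih]
  simpa only [min_eq_left (hN _)] using hstages N

theorem QF.sat_posTrace_congr (p : AP) (ψ : QF AP) {D Λ : ℕ} (hD : Λ + ψ.nextDepth + 2 ≤ D)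
    {X Y lab : ℕ → ℕ} (hlab : ∀ v, lab v ≤ Λ) (hXY : ∀ v w, X v < X w ↔ Y v < Y w)
    {N : ℕ} (hX : ∀ v, X v ≤ N) (hY : ∀ v, Y v ≤ N) :
    ψ.sat (fun v => posTrace p D (X v) (lab v)) ↔
      ψ.sat (fun v => posTrace p D (Y v) (lab v)) := by
  rw [← ψ.sat_posTrace_add p hD hlab (fun v w => (hXY v w).2) hY,
    ← ψ.sat_posTrace_add p hD hlab (fun v w => (hXY v w).1) hX]
  simp only [Nat.add_comm (X _)]

end Stuttering

/-! ### Words as sets of traces -/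

section Transfer

variable {AP : Type}

/-- The set of traces coding the word `w`: one trace for each of its positions. -/
def wordTraces (p : AP) (D : ℕ) (w : List ℕ) : Set (Trace AP) :=
  {t | ∃ u c v, w = u ++ c :: v ∧ t = posTrace p D u.length c}

/-- The nesting depth of the operator `X` in the quantifier-free part. -/
def HFormula.nextDepth : HFormula AP → ℕ
  | .ex _ φ => φ.nextDepth
  | .all _ φ => φ.nextDepth
  | .qf ψ => ψ.nextDepth

theorem update_posTrace (p : AP) (D : ℕ) (f : ℕ × ℕ → ℕ) (q : ℕ → ℕ × ℕ) (lab : ℕ → ℕ) (x : ℕ)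
    (r : ℕ × ℕ) (c : ℕ) :
    Function.update (fun v => posTrace p D (f (q v)) (lab v)) x (posTrace p D (f r) c) =
      fun v => posTrace p D (f (Function.update q x r v)) (Function.update lab x c v) :=
  funext fun v => (Function.apply_update₂ (fun _ r c => posTrace p D (f r) c) q lab x r c v).symm

theorem HFormula.sat_wordTraces_of_wordMatching {p : AP} {D Λ : ℕ} {w w' : List ℕ} (φ : HFormula AP)
    (hw : ∀ x ∈ w, x ≤ Λ) (hD : Λ + φ.nextDepth + 2 ≤ D)
    {P : Set (ℕ × ℕ)} (h : WordMatching (PrefixLE φ.prefixList) w w' P) {q : ℕ → ℕ × ℕ}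
    (hq : ∀ v, q v ∈ P) {lab : ℕ → ℕ} (hlab : ∀ v, lab v ≤ Λ)
    (hsat : φ.sat (wordTraces p D w) fun v => posTrace p D (q v).1 (lab v)) :
    φ.sat (wordTraces p D w') fun v => posTrace p D (q v).2 (lab v) := by
  induction φ generalizing P q lab with
  | ex x φ ih =>
    obtain ⟨_, ⟨u, c, v, hu, rfl⟩, hsat⟩ := hsat
    obtain ⟨u', v', P', hu', hP, hmem, h'⟩ := h.extend hu
    refine ⟨_, ⟨u', c, v', hu', rfl⟩, ?_⟩
    rw [update_posTrace p D Prod.fst q lab x (u.length, u'.length)] at hsat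
    rw [update_posTrace p D Prod.snd q lab x (u.length, u'.length)]
    refine ih hD h' ?_ ?_ hsat
    · exact (Function.forall_update_iff q fun _ r => r ∈ P').2 ⟨hmem, fun v _ => hP (hq v)⟩
    · exact (Function.forall_update_iff lab fun _ c => c ≤ Λ).2
        ⟨hw c (by simp [hu]), fun v _ => hlab v⟩
  | all x φ ih =>
    rintro _ ⟨u', c, v', hu', rfl⟩
    obtain ⟨u, v, P', hu, hP, hmem, h'⟩ := h.extend_back hu'
    have hsat := hsat _ ⟨u, c, v, hu, rfl⟩
    rw [update_posTrace p D Prod.fst q lab x (u.length, u'.length)] at hsat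
    rw [update_posTrace p D Prod.snd q lab x (u.length, u'.length)]
    refine ih hD h' ?_ ?_ hsat
    · exact (Function.forall_update_iff q fun _ r => r ∈ P').2 ⟨hmem, fun v _ => hP (hq v)⟩
    · exact (Function.forall_update_iff lab fun _ c => c ≤ Λ).2
        ⟨hw c (by simp [hu]), fun v _ => hlab v⟩
  | qf ψ =>
    exact (ψ.sat_posTrace_congr p hD hlab (fun v w => h.lt_iff_lt (hq v) (hq w))
      (fun v => (h.lt_length (hq v)).1.le.trans (le_max_left _ _))
      (fun v => (h.lt_length (hq v)).2.le.trans (le_max_right _ _))).1 hsat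

theorem QF.sat_congr (ψ : QF AP) {As As' : ℕ → Trace AP} (h : ∀ x ∈ ψ.freeVars, As x = As' x) :
    ψ.sat As ↔ ψ.sat As' := by
  induction ψ generalizing As As' with
  | atom a x => simp only [QF.sat, h x rfl]
  | neg ψ ih => exact not_congr (ih h)
  | disj ψ₁ ψ₂ ih₁ ih₂ =>
    exact or_congr (ih₁ fun x hx => h x (.inl hx)) (ih₂ fun x hx => h x (.inr hx))
  | next ψ ih => exact ih fun x hx => congrArg (Trace.shift · 1) (h x hx)
  | untl ψ₁ ψ₂ ih₁ ih₂ =>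
    have h₁ (j : ℕ) : ψ₁.sat (shiftAsg As j) ↔ ψ₁.sat (shiftAsg As' j) :=
      ih₁ fun x hx => congrArg (Trace.shift · j) (h x (.inl hx))
    have h₂ (j : ℕ) : ψ₂.sat (shiftAsg As j) ↔ ψ₂.sat (shiftAsg As' j) :=
      ih₂ fun x hx => congrArg (Trace.shift · j) (h x (.inr hx))
    simp only [QF.sat, h₁, h₂]

theorem HFormula.sat_congr (φ : HFormula AP) {T : Set (Trace AP)} {As As' : ℕ → Trace AP}
    (h : ∀ x ∈ φ.freeVars, As x = As' x) : φ.sat T As ↔ φ.sat T As' := by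
  have hupdate {x : ℕ} {s : Set ℕ} {As As' : ℕ → Trace AP} (h : ∀ y ∈ s \ {x}, As y = As' y)
      (t : Trace AP) : ∀ y ∈ s, Function.update As x t y = Function.update As' x t y := by
    intro y hy
    by_cases hyx : y = x
    · rw [hyx, Function.update_self, Function.update_self]
    · rw [Function.update_of_ne hyx, Function.update_of_ne hyx, h y ⟨hy, hyx⟩]
  induction φ generalizing As As' with
  | ex x φ ih => exact exists_congr fun t => and_congr_right fun _ => ih (hupdate h t)
  | all x φ ih => exact forall₂_congr fun t _ => ih (hupdate h t)
  | qf ψ => exact ψ.sat_congr h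

theorem HFormula.IsSentence.hModels_iff {φ : HFormula AP} (hφ : φ.IsSentence) {T : Set (Trace AP)}
    (As : ℕ → Trace AP) : HModels T φ ↔ φ.sat T As :=
  φ.sat_congr fun _ hx => (hφ.subset hx).elim

theorem hModels_wordTraces_of_prefixLE {φ : HFormula AP} (hφ : φ.IsSentence) {p : AP} {D c : ℕ}
    {u v : List ℕ} (hD : c + φ.nextDepth + 2 ≤ D) (hu : ∀ x ∈ u, x ≤ c)
    (h : PrefixLE φ.prefixList u v) (hmodel : HModels (wordTraces p D (c :: u)) φ) :
    HModels (wordTraces p D (c :: v)) φ := by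
  rw [hφ.hModels_iff fun _ => posTrace p D 0 c] at hmodel ⊢
  exact φ.sat_wordTraces_of_wordMatching (q := fun _ => (0, 0)) (by simpa using hu) hD
    (.join c (w₁ := []) (w₁' := []) (.gap (.refl _ _)) (.gap h)) (fun _ => Set.mem_insert _ _)
    (fun _ => le_rfl) hmodel

end Transfer

/-! ### The separating sentences -/

section Formulas

variable {AP : Type}

/-- Conjunction. -/
def QF.and (ψ₁ ψ₂ : QF AP) : QF AP := .neg (.disj (.neg ψ₁) (.neg ψ₂))

@[simp]
theorem QF.sat_and {ψ₁ ψ₂ : QF AP} {As : ℕ → Trace AP} :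
    (ψ₁.and ψ₂).sat As ↔ ψ₁.sat As ∧ ψ₂.sat As := by
  simp only [QF.and, QF.sat, not_or, not_not]

@[simp]
theorem QF.freeVars_and (ψ₁ ψ₂ : QF AP) :
    (ψ₁.and ψ₂).freeVars = ψ₁.freeVars ∪ ψ₂.freeVars := rfl

/-- The operator `F`, with the tautology `ψ ∨ ¬ψ` in the role of `true`. -/
def QF.eventually (ψ : QF AP) : QF AP := .untl (.disj ψ (.neg ψ)) ψ

@[simp]
theorem QF.sat_eventually {ψ : QF AP} {As : ℕ → Trace AP} :
    ψ.eventually.sat As ↔ ∃ j, ψ.sat (shiftAsg As j) := by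
  simp only [QF.eventually, QF.sat, em, implies_true, and_true]

@[simp]
theorem QF.freeVars_eventually (ψ : QF AP) : ψ.eventually.freeVars = ψ.freeVars := by
  simp only [QF.eventually, QF.freeVars, Set.union_self]

/-- The negation of a prenex formula, in prenex form. -/
def HFormula.not : HFormula AP → HFormula AP
  | .ex x φ => .all x φ.not
  | .all x φ => .ex x φ.not
  | .qf ψ => .qf (.neg ψ)

@[simp]
theorem HFormula.sat_not {φ : HFormula AP} {T : Set (Trace AP)} {As : ℕ → Trace AP} :
    φ.not.sat T As ↔ ¬ φ.sat T As := by
  induction φ generalizing As with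
  | ex x φ ih => simp only [HFormula.not, HFormula.sat, ih, not_exists, not_and]
  | all x φ ih => simp only [HFormula.not, HFormula.sat, ih, not_forall, exists_prop]
  | qf ψ => rfl

@[simp]
theorem HFormula.freeVars_not (φ : HFormula AP) : φ.not.freeVars = φ.freeVars := by
  induction φ with
  | ex x φ ih => exact congrArg (· \ {x}) ih
  | all x φ ih => exact congrArg (· \ {x}) ih
  | qf ψ => rfl

@[simp]
theorem HFormula.prefixList_not (φ : HFormula AP) :
    φ.not.prefixList = φ.prefixList.map Bool.not := by
  induction φ with
  | ex _ φ ih => exact congrArg (false :: ·) ih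
  | all _ φ ih => exact congrArg (true :: ·) ih
  | qf ψ => rfl

/-- The bound variables of a formula. -/
def HFormula.boundVars : HFormula AP → Set ℕ
  | .ex x φ => insert x φ.boundVars
  | .all x φ => insert x φ.boundVars
  | .qf _ => ∅

@[simp]
theorem HFormula.boundVars_not (φ : HFormula AP) : φ.not.boundVars = φ.boundVars := by
  induction φ with
  | ex x φ ih => exact congrArg (insert x) ih
  | all x φ ih => exact congrArg (insert x) ih
  | qf ψ => rfl

/-- The conjunction of the quantifier-free formula `α` and the prenex formula `φ`, in prenex
form. -/
def HFormula.guard (α : QF AP) : HFormula AP → HFormula AP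
  | .ex x φ => .ex x (φ.guard α)
  | .all x φ => .all x (φ.guard α)
  | .qf ψ => .qf (α.and ψ)

theorem HFormula.sat_guard {α : QF AP} {φ : HFormula AP} {T : Set (Trace AP)} (hT : T.Nonempty)
    (h : Disjoint φ.boundVars α.freeVars) {As : ℕ → Trace AP} :
    (φ.guard α).sat T As ↔ α.sat As ∧ φ.sat T As := by
  have hα {x : ℕ} {s : Set ℕ} (h : Disjoint (insert x s) α.freeVars) (As : ℕ → Trace AP)
      (t : Trace AP) : α.sat (Function.update As x t) ↔ α.sat As :=
    α.sat_congr fun y hy =>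
      Function.update_of_ne (ne_of_mem_of_not_mem hy (Set.disjoint_insert_left.1 h).1) t As
  induction φ generalizing As with
  | ex x φ ih =>
    simp only [HFormula.guard, HFormula.sat, ih (Set.disjoint_insert_left.1 h).2, hα h]
    exact ⟨fun ⟨t, ht, hα, hφ⟩ => ⟨hα, t, ht, hφ⟩, fun ⟨hα, t, ht, hφ⟩ => ⟨t, ht, hα, hφ⟩⟩
  | all x φ ih =>
    simp only [HFormula.guard, HFormula.sat, ih (Set.disjoint_insert_left.1 h).2, hα h]
    exact ⟨fun h => ⟨(h _ hT.some_mem).1, fun t ht => (h t ht).2⟩,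
      fun ⟨hα, hφ⟩ t ht => ⟨hα, hφ t ht⟩⟩
  | qf ψ => exact QF.sat_and

theorem HFormula.freeVars_guard_subset (α : QF AP) (φ : HFormula AP) :
    (φ.guard α).freeVars ⊆ α.freeVars ∪ φ.freeVars := by
  induction φ with
  | ex x φ ih => exact fun y hy => (ih hy.1).imp_right fun h => ⟨h, hy.2⟩
  | all x φ ih => exact fun y hy => (ih hy.1).imp_right fun h => ⟨h, hy.2⟩
  | qf ψ => exact subset_rfl

@[simp]
theorem HFormula.prefixList_guard (α : QF AP) (φ : HFormula AP) :
    (φ.guard α).prefixList = φ.prefixList := by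
  induction φ with
  | ex _ φ ih => exact congrArg (true :: ·) ih
  | all _ φ ih => exact congrArg (false :: ·) ih
  | qf ψ => rfl

@[simp]
theorem HFormula.boundVars_guard (α : QF AP) (φ : HFormula AP) :
    (φ.guard α).boundVars = φ.boundVars := by
  induction φ with
  | ex x φ ih => exact congrArg (insert x) ih
  | all x φ ih => exact congrArg (insert x) ih
  | qf ψ => rfl

/-- The proposition `p` holds at the positions `0, …, c` of the trace `x`. -/
def QF.holdsUpTo (p : AP) (x : ℕ) : ℕ → QF AP
  | 0 => .atom p x
  | c + 1 => .and (.atom p x) (.next (holdsUpTo p x c))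

theorem QF.sat_holdsUpTo {p : AP} {x c : ℕ} {As : ℕ → Trace AP} :
    (QF.holdsUpTo p x c).sat As ↔ ∀ i ≤ c, p ∈ As x i := by
  induction c generalizing As with
  | zero => simp [QF.holdsUpTo, QF.sat]
  | succ c ih =>
    simp only [QF.holdsUpTo, QF.sat_and, QF.sat, ih, shiftAsg, Trace.shift]
    refine ⟨fun ⟨h₀, h⟩ i hi => ?_, fun h => ⟨h 0 (by omega), fun i hi => h (i + 1) (by omega)⟩⟩
    rcases i with _ | i
    exacts [h₀, h i (by omega)]

theorem QF.freeVars_holdsUpTo (p : AP) (x c : ℕ) : (QF.holdsUpTo p x c).freeVars = {x} := by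
  induction c with
  | zero => rfl
  | succ c ih => simp [QF.holdsUpTo, QF.freeVars, ih]

/-- The trace `x` codes an occurrence of the letter `c`. -/
def QF.label (p : AP) (c x : ℕ) : QF AP :=
  .and (QF.holdsUpTo p x c).eventually (.neg (QF.holdsUpTo p x (c + 1)).eventually)

@[simp]
theorem QF.freeVars_label (p : AP) (c x : ℕ) : (QF.label p c x).freeVars = {x} := by
  simp [QF.label, QF.freeVars, QF.freeVars_holdsUpTo]

theorem QF.sat_label {p : AP} {D i c d x : ℕ} {As : ℕ → Trace AP} (hx : As x = posTrace p D i d) :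
    (QF.label p c x).sat As ↔ d = c := by
  have hle (c : ℕ) : (QF.holdsUpTo p x c).eventually.sat As ↔ c ≤ d := by
    simp only [QF.sat_eventually, QF.sat_holdsUpTo, shiftAsg, Trace.shift, hx, posTrace,
      mem_blockTrace, true_and]
    refine ⟨fun ⟨j, h⟩ => ?_, fun h => ⟨D * (i + 1), fun k hk => by omega⟩⟩
    have := h 0 c.zero_le
    have := h c le_rfl
    omega
  simp only [QF.label, QF.sat_and, QF.sat, hle]
  omega

/-- The trace `x` codes an earlier position than the trace `y`. -/
def QF.precedes (p : AP) (x y : ℕ) : QF AP :=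
  (QF.and (.atom p x) (.and (.neg (.atom p y)) (QF.atom p y).eventually)).eventually

@[simp]
theorem QF.freeVars_precedes (p : AP) (x y : ℕ) : (QF.precedes p x y).freeVars = {x, y} := by
  simp [QF.precedes, QF.freeVars, Set.pair_comm]

theorem mul_succ_add_le_of_lt {D i j : ℕ} (h : i < j) : D * (i + 1) + D ≤ D * (j + 1) :=
  Nat.mul_le_mul_left D (show i + 1 + 1 ≤ j + 1 by omega)

theorem QF.sat_precedes {p : AP} {D i j c d x y : ℕ} {As : ℕ → Trace AP}
    (hx : As x = posTrace p D i c) (hy : As y = posTrace p D j d) (hd : d < D) :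
    (QF.precedes p x y).sat As ↔ i < j := by
  simp only [QF.precedes, QF.sat_eventually, QF.sat_and, QF.sat, shiftAsg, Trace.shift, hx, hy,
    posTrace, mem_blockTrace, true_and]
  constructor
  · rintro ⟨a, hxa, hya, b, hyb⟩
    by_contra! hji
    rcases hji.eq_or_lt with rfl | hji
    · omega
    · have := mul_succ_add_le_of_lt (D := D) hji
      omega
  · intro hij
    have := mul_succ_add_le_of_lt (D := D) hij
    exact ⟨D * (i + 1), by omega, by omega, D * (j + 1) - D * (i + 1), by omega⟩

/-- Some proposition of the list `a :: L` holds in the trace `x`. -/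
def QF.someAtom (x : ℕ) : AP → List AP → QF AP
  | a, [] => .atom a x
  | a, b :: L => .disj (.atom a x) (someAtom x b L)

theorem QF.sat_someAtom {x : ℕ} {a : AP} {L : List AP} {As : ℕ → Trace AP} :
    (QF.someAtom x a L).sat As ↔ ∃ b ∈ a :: L, b ∈ As x 0 := by
  induction L generalizing a with
  | nil => simp [QF.someAtom, QF.sat]
  | cons b L ih => simp only [QF.someAtom, QF.sat, ih, List.exists_mem_cons_iff]

theorem QF.freeVars_someAtom (x : ℕ) (a : AP) (L : List AP) :
    (QF.someAtom x a L).freeVars = {x} := by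
  induction L generalizing a with
  | nil => rfl
  | cons b L ih => simp [QF.someAtom, QF.freeVars, ih]

/-- The trace `x` codes an earlier position than the trace `y`, and both code the letter `c`. -/
def QF.bracketPair (p : AP) (c x y : ℕ) : QF AP :=
  .and (.and (.label p c x) (.label p c y)) (.precedes p x y)

@[simp]
theorem QF.freeVars_bracketPair (p : AP) (c x y : ℕ) :
    (QF.bracketPair p c x y).freeVars = {x, y} := by
  simp [QF.bracketPair, Set.pair_comm]

theorem QF.sat_bracketPair {p : AP} {D i j c d e x y : ℕ} {As : ℕ → Trace AP}
    (hx : As x = posTrace p D i d) (hy : As y = posTrace p D j e) (he : e < D) :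
    (QF.bracketPair p c x y).sat As ↔ (d = c ∧ e = c) ∧ i < j := by
  simp only [QF.bracketPair, QF.sat_and, QF.sat_label hx, QF.sat_label hy,
    QF.sat_precedes hx hy he]

/-- The position of the trace `x` follows that of `k`, and the position of `y` precedes that of
`k + 1`. -/
def QF.nested (p : AP) (k x y : ℕ) : QF AP :=
  .and (.precedes p k x) (.precedes p y (k + 1))

theorem QF.freeVars_nested (p : AP) (k x y : ℕ) :
    (QF.nested p k x y).freeVars = {k, x} ∪ {y, k + 1} := by
  rw [QF.nested, QF.freeVars_and, QF.freeVars_precedes, QF.freeVars_precedes]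

theorem QF.sat_nested {p : AP} {D i j i' j' c d c' d' k x y : ℕ} {As : ℕ → Trace AP}
    (hk : As k = posTrace p D i c) (hk' : As (k + 1) = posTrace p D j d)
    (hx : As x = posTrace p D i' c') (hy : As y = posTrace p D j' d') (hd : d < D) (hc' : c' < D) :
    (QF.nested p k x y).sat As ↔ i < i' ∧ j' < j := by
  rw [QF.nested, QF.sat_and, QF.sat_precedes hk hx hc', QF.sat_precedes hy hk' hd]

/-- The formula expressing `Bracketed m` for the factor strictly between the positions coded by the
traces `k` and `k + 1`. Its bound variables are numbered from `k + 2` on, so that none of them is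
captured. -/
def bracketFormula (p : AP) : ℕ → ℕ → HFormula AP
  | 0, k => .ex (k + 2) (.qf (.and (.label p 0 (k + 2)) (.nested p k (k + 2) (k + 2))))
  | m + 1, k => .ex (k + 2) (.ex (k + 3) (.guard
      (.and (.bracketPair p (m + 1) (k + 2) (k + 3)) (.nested p k (k + 2) (k + 3)))
      (bracketFormula p m (k + 2)).not))

theorem freeVars_bracketFormula_subset (p : AP) (m k : ℕ) :
    (bracketFormula p m k).freeVars ⊆ {k, k + 1} := by
  induction m generalizing k with
  | zero =>
    rintro x ⟨hx, h₂⟩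
    simp only [HFormula.freeVars, QF.freeVars_and, QF.freeVars_label, QF.freeVars_nested] at hx
    rcases hx with hx | (hx | hx) | hx | hx
    exacts [(h₂ hx).elim, .inl hx, (h₂ hx).elim, (h₂ hx).elim, .inr hx]
  | succ m ih =>
    rintro x ⟨⟨hx, h₃⟩, h₂⟩
    have hsub := HFormula.freeVars_guard_subset _ _ hx
    rw [HFormula.freeVars_not, QF.freeVars_and, QF.freeVars_bracketPair, QF.freeVars_nested] at hsub
    rcases hsub with ((hx | hx) | (hx | hx) | hx | hx) | hx
    exacts [(h₂ hx).elim, (h₃ hx).elim, .inl hx, (h₂ hx).elim, (h₃ hx).elim, .inr hx,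
      ((ih (k + 2) hx).elim h₂ h₃).elim]

theorem boundVars_bracketFormula_subset (p : AP) (m k : ℕ) :
    (bracketFormula p m k).boundVars ⊆ Set.Ici (k + 2) := by
  induction m generalizing k with
  | zero => simp [bracketFormula, HFormula.boundVars]
  | succ m ih =>
    simp only [bracketFormula, HFormula.boundVars, HFormula.boundVars_guard,
      HFormula.boundVars_not, Set.insert_subset_iff, Set.mem_Ici]
    exact ⟨le_rfl, Nat.le_succ _, (ih (k + 2)).trans (Set.Ici_subset_Ici.2 (by omega))⟩

theorem disjoint_boundVars_not_bracketFormula (p : AP) (m : ℕ) {k : ℕ} {s : Set ℕ}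
    (hs : ∀ x ∈ s, x < k + 2) : Disjoint (bracketFormula p m k).not.boundVars s := by
  rw [HFormula.boundVars_not]
  exact Set.disjoint_left.2 fun x hx hxs =>
    (hs x hxs).not_ge (boundVars_bracketFormula_subset p m k hx)

theorem altPrefix_bracketFormula (p : AP) (m k : ℕ) :
    AltPrefix (m + 1) true (bracketFormula p m k).prefixList := by
  induction m generalizing k with
  | zero => exact .cons (.of_not rfl)
  | succ m ih =>
    simp only [bracketFormula, HFormula.prefixList, HFormula.prefixList_guard,
      HFormula.prefixList_not]
    exact .cons (.cons (.of_not (ih (k + 2)).map_not))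

theorem exists_wordTraces_iff {p : AP} {D : ℕ} {w : List ℕ} {Q : Trace AP → Prop} :
    (∃ t ∈ wordTraces p D w, Q t) ↔ ∃ u c v, w = u ++ c :: v ∧ Q (posTrace p D u.length c) :=
  ⟨fun ⟨_, ⟨u, c, v, hw, ht⟩, h⟩ => ⟨u, c, v, hw, ht ▸ h⟩,
    fun ⟨u, c, v, hw, h⟩ => ⟨_, ⟨u, c, v, hw, rfl⟩, h⟩⟩

theorem nonempty_wordTraces (p : AP) (D : ℕ) {w u v : List ℕ} {c : ℕ} (h : w = u ++ c :: v) :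
    (wordTraces p D w).Nonempty := ⟨_, u, c, v, h, rfl⟩

theorem exists_of_length_lt_of_append_cons_eq {α : Type*} {u v x y : List α} {c d : α}
    (h : u ++ c :: v = x ++ d :: y) (hlt : u.length < x.length) :
    ∃ z, x = u ++ c :: z ∧ v = z ++ d :: y := by
  obtain ⟨z, rfl, hz⟩ | ⟨z, rfl, -⟩ := List.append_eq_append_iff.1 h
  · obtain _ | ⟨e, z⟩ := z
    · simp at hlt
    · obtain ⟨rfl, rfl⟩ := List.cons.inj hz
      exact ⟨z, rfl, rfl⟩
  · simp at hlt

theorem exists_of_length_lt_of_length_lt {α : Type*} {u v y x z : List α} {c d e : α}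
    (h : u ++ c :: (v ++ d :: y) = x ++ e :: z) (hux : u.length < x.length)
    (hxv : x.length < (u ++ c :: v).length) :
    ∃ v₁ v₂, v = v₁ ++ e :: v₂ ∧ x = u ++ c :: v₁ := by
  obtain ⟨v₁, rfl, hv⟩ := exists_of_length_lt_of_append_cons_eq h hux
  obtain ⟨v₂, rfl, -⟩ := exists_of_length_lt_of_append_cons_eq hv.symm (by simpa using hxv)
  exact ⟨v₁, v₂, rfl, rfl⟩

section Semantics

variable {p : AP} {D : ℕ} {w : List ℕ} {m k i j c d : ℕ} {As : ℕ → Trace AP}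

theorem sat_bracketFormula_zero_iff (hw : ∀ x ∈ w, x < D) (hk : As k = posTrace p D i c)
    (hk' : As (k + 1) = posTrace p D j d) (hd : d < D) :
    (bracketFormula p 0 k).sat (wordTraces p D w) As ↔
      ∃ x₁ x₂, w = x₁ ++ 0 :: x₂ ∧ i < x₁.length ∧ x₁.length < j := by
  have hmatrix {x₁ x₂ : List ℕ} {e : ℕ} (hx : w = x₁ ++ e :: x₂) :
      (QF.and (.label p 0 (k + 2)) (.nested p k (k + 2) (k + 2))).sat
          (Function.update As (k + 2) (posTrace p D x₁.length e)) ↔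
        e = 0 ∧ i < x₁.length ∧ x₁.length < j := by
    have hself := Function.update_self (k + 2) (posTrace p D x₁.length e) As
    rw [QF.sat_and, QF.sat_label hself,
      QF.sat_nested (by simpa using hk) (by simpa using hk') hself hself hd (hw e (by simp [hx]))]
  simp only [bracketFormula, HFormula.sat, exists_wordTraces_iff]
  constructor
  · rintro ⟨x₁, e, x₂, hx, h⟩
    obtain ⟨rfl, hpos⟩ := (hmatrix hx).1 h
    exact ⟨x₁, x₂, hx, hpos⟩
  · rintro ⟨x₁, x₂, hx, hpos⟩
    exact ⟨x₁, 0, x₂, hx, (hmatrix hx).2 ⟨rfl, hpos⟩⟩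

theorem sat_bracketFormula_succ_iff (hw : ∀ x ∈ w, x < D) (hk : As k = posTrace p D i c)
    (hk' : As (k + 1) = posTrace p D j d) (hd : d < D) :
    (bracketFormula p (m + 1) k).sat (wordTraces p D w) As ↔
      ∃ x₁ x₂ z₁ z₂, w = x₁ ++ (m + 1) :: x₂ ∧ w = z₁ ++ (m + 1) :: z₂ ∧
        x₁.length < z₁.length ∧ (i < x₁.length ∧ z₁.length < j) ∧
        ¬ (bracketFormula p m (k + 2)).sat (wordTraces p D w)
          (Function.update (Function.update As (k + 2) (posTrace p D x₁.length (m + 1))) (k + 3)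
            (posTrace p D z₁.length (m + 1))) := by
  have hdisj : Disjoint (bracketFormula p m (k + 2)).not.boundVars
      (QF.and (.bracketPair p (m + 1) (k + 2) (k + 3)) (.nested p k (k + 2) (k + 3))).freeVars := by
    refine disjoint_boundVars_not_bracketFormula p m fun x hx => ?_
    rw [QF.freeVars_and, QF.freeVars_bracketPair, QF.freeVars_nested] at hx
    rcases hx with (rfl | rfl) | (rfl | rfl) | rfl | rfl <;> omega
  have hmatrix {x₁ x₂ z₁ z₂ : List ℕ} {e f : ℕ} (hx : w = x₁ ++ e :: x₂) (hz : w = z₁ ++ f :: z₂) :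
      (QF.and (.bracketPair p (m + 1) (k + 2) (k + 3)) (.nested p k (k + 2) (k + 3))).sat
          (Function.update (Function.update As (k + 2) (posTrace p D x₁.length e)) (k + 3)
            (posTrace p D z₁.length f)) ↔
        ((e = m + 1 ∧ f = m + 1) ∧ x₁.length < z₁.length) ∧ i < x₁.length ∧ z₁.length < j := by
    have hx' : Function.update (Function.update As (k + 2) (posTrace p D x₁.length e)) (k + 3)
        (posTrace p D z₁.length f) (k + 2) = posTrace p D x₁.length e := by simp
    rw [QF.sat_and, QF.sat_bracketPair hx' (Function.update_self ..) (hw f (by simp [hz])),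
      QF.sat_nested (by simpa using hk) (by simpa using hk') hx' (Function.update_self ..) hd
        (hw e (by simp [hx]))]
  simp only [bracketFormula, HFormula.sat, exists_wordTraces_iff]
  constructor
  · rintro ⟨x₁, e, x₂, hx, z₁, f, z₂, hz, h⟩
    rw [HFormula.sat_guard (nonempty_wordTraces p D hx) hdisj, hmatrix hx hz, HFormula.sat_not] at h
    obtain ⟨⟨⟨⟨rfl, rfl⟩, hxz⟩, hpos⟩, h⟩ := h
    exact ⟨x₁, x₂, z₁, z₂, hx, hz, hxz, hpos, h⟩
  · rintro ⟨x₁, x₂, z₁, z₂, hx, hz, hxz, hpos, h⟩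
    refine ⟨x₁, m + 1, x₂, hx, z₁, m + 1, z₂, hz, ?_⟩
    rw [HFormula.sat_guard (nonempty_wordTraces p D hx) hdisj, hmatrix hx hz, HFormula.sat_not]
    exact ⟨⟨⟨⟨rfl, rfl⟩, hxz⟩, hpos⟩, h⟩

theorem sat_bracketFormula_iff (hw : ∀ x ∈ w, x < D) {u v y : List ℕ}
    (huv : w = u ++ c :: (v ++ d :: y)) (hk : As k = posTrace p D u.length c)
    (hk' : As (k + 1) = posTrace p D (u ++ c :: v).length d) :
    (bracketFormula p m k).sat (wordTraces p D w) As ↔ Bracketed m v := by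
  have hd : d < D := hw d (by simp [huv])
  induction m generalizing k u v y c d As with
  | zero =>
    rw [sat_bracketFormula_zero_iff hw hk hk' hd]
    constructor
    · rintro ⟨x₁, x₂, hx, hux, hxv⟩
      obtain ⟨v₁, v₂, rfl, -⟩ := exists_of_length_lt_of_length_lt (huv.symm.trans hx) hux hxv
      exact List.mem_append_right v₁ List.mem_cons_self
    · intro h
      obtain ⟨v₁, v₂, rfl⟩ := List.append_of_mem h
      exact ⟨u ++ c :: v₁, v₂ ++ d :: y, by simp [huv], by simp, by simp⟩
  | succ m ih =>
    rw [sat_bracketFormula_succ_iff hw hk hk' hd]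
    constructor
    · rintro ⟨x₁, x₂, z₁, z₂, hx, hz, hxz, ⟨hux, hzv⟩, h⟩
      obtain ⟨v₁, v', rfl, rfl⟩ :=
        exists_of_length_lt_of_length_lt (huv.symm.trans hx) hux (hxz.trans hzv)
      have hsplit : w = (u ++ c :: v₁) ++ (m + 1) :: (v' ++ d :: y) := by simp [huv]
      obtain ⟨v₂, v₃, rfl, rfl⟩ :=
        exists_of_length_lt_of_length_lt (hsplit.symm.trans hz) hxz (by simpa using hzv)
      have hz' : w = (u ++ c :: v₁) ++ (m + 1) :: (v₂ ++ (m + 1) :: (v₃ ++ d :: y)) := by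
        simp [huv]
      refine ⟨v₁, v₂, v₃, rfl, fun hv => h ((ih hz' ?_ ?_ (hw _ ?_)).2 hv)⟩
      · simp
      · simp
      · simp [hz']
    · rintro ⟨v₁, v₂, v₃, rfl, h⟩
      have hx : w = (u ++ c :: v₁) ++ (m + 1) :: (v₂ ++ (m + 1) :: (v₃ ++ d :: y)) := by simp [huv]
      refine ⟨_, _, (u ++ c :: v₁) ++ (m + 1) :: v₂, v₃ ++ d :: y, hx, by simp [huv], by simp,
        by simp, fun hv => h ((ih hx ?_ ?_ (hw _ ?_)).1 hv)⟩
      · simp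
      · simp
      · simp [hx]

end Semantics

/-- The assignment of traces to the variables `0, …, 3` of `separatingSentence`. -/
def separatingAsg (x y b z : Trace AP) : ℕ → Trace AP :=
  Function.update (Function.update (Function.update (Function.update (fun _ _ => ∅) 2 x) 3 y) 1 b) 0
    z

theorem separatingAsg_one (x y b z : Trace AP) : separatingAsg x y b z 1 = b := rfl

theorem separatingAsg_two (x y b z : Trace AP) : separatingAsg x y b z 2 = x := rfl

theorem separatingAsg_three (x y b z : Trace AP) : separatingAsg x y b z 3 = y := rfl

theorem finite_setOf_forall_ge_eq {α : Type*} [Finite α] (N : ℕ) (a : α) :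
    {f : ℕ → α | ∀ i, N ≤ i → f i = a}.Finite := by
  refine Set.Finite.of_finite_image (f := fun f (i : Fin N) => f i) (Set.toFinite _) ?_
  intro f hf g hg hfg
  funext i
  rcases lt_or_ge i N with hi | hi
  exacts [congrFun hfg ⟨i, hi⟩, (hf i hi).trans (hg i hi).symm]

section Finite

variable [Fintype AP]

/-- The current letter of the trace `x` is nonempty. The proposition `p` only serves to have a
nonempty list of disjuncts. -/
noncomputable def QF.nonempty (p : AP) (x : ℕ) : QF AP := .someAtom x p Finset.univ.toList

@[simp]
theorem QF.sat_nonempty {p : AP} {x : ℕ} {As : ℕ → Trace AP} :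
    (QF.nonempty p x).sat As ↔ (As x 0).Nonempty := by
  simp [QF.nonempty, QF.sat_someAtom, Set.Nonempty]

@[simp]
theorem QF.freeVars_nonempty (p : AP) (x : ℕ) : (QF.nonempty p x).freeVars = {x} :=
  QF.freeVars_someAtom x p _

/-- The trace `y` is eventually empty, and is so no earlier than the trace `z`. -/
noncomputable def QF.bounds (p : AP) (y z : ℕ) : QF AP :=
  .and (QF.neg (QF.nonempty p y).eventually).eventually
    (.neg (QF.and (.nonempty p z) (.neg (QF.nonempty p y).eventually)).eventually)

@[simp]
theorem QF.freeVars_bounds (p : AP) (y z : ℕ) : (QF.bounds p y z).freeVars = {y, z} := by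
  simp [QF.bounds, QF.freeVars, Set.pair_comm]

theorem QF.sat_bounds {p : AP} {y z : ℕ} {As : ℕ → Trace AP} :
    (QF.bounds p y z).sat As ↔ (∃ j, ∀ k, As y (k + j) = ∅) ∧
      ∀ j, (As z j).Nonempty → ∃ k, (As y (k + j)).Nonempty := by
  simp only [QF.bounds, QF.sat_and, QF.sat_eventually, QF.sat, QF.sat_nonempty, shiftAsg,
    Trace.shift, Nat.zero_add, not_exists, not_and, Set.not_nonempty_iff_eq_empty,
    ← Set.nonempty_iff_ne_empty, not_forall, ← ne_eq]

theorem QF.sat_bounds_posTrace {p : AP} {D i j c d y z : ℕ} {As : ℕ → Trace AP}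
    (hy : As y = posTrace p D j d) (hz : As z = posTrace p D i c)
    (h : D * (i + 1) + c ≤ D * (j + 1) + d) : (QF.bounds p y z).sat As := by
  simp only [QF.sat_bounds, hy, hz, posTrace, Set.Nonempty, Set.eq_empty_iff_forall_notMem,
    mem_blockTrace]
  refine ⟨⟨D * (j + 1) + d + 1, fun k q hq => by omega⟩, ?_⟩
  rintro k ⟨q, -, -, hk⟩
  exact ⟨D * (j + 1) + d - k, p, rfl, by omega, by omega⟩

theorem exists_mem_wordTraces_sat_bounds {p : AP} {D : ℕ} {w : List ℕ} (hw : ∀ x ∈ w, x < D)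
    (hne : w ≠ []) (y z : ℕ) :
    ∃ b ∈ wordTraces p D w, ∀ As : ℕ → Trace AP, As y = b → As z ∈ wordTraces p D w →
      (QF.bounds p y z).sat As := by
  obtain ⟨w, d, rfl⟩ := w.eq_nil_or_concat'.resolve_left hne
  refine ⟨_, ⟨w, d, [], rfl, rfl⟩, fun As hy ⟨u, c, v, hu, hz⟩ => QF.sat_bounds_posTrace hy hz ?_⟩
  obtain rfl | ⟨v, e, rfl⟩ := v.eq_nil_or_concat'
  · obtain ⟨rfl, hcd⟩ := List.append_inj' hu rfl
    rw [(List.cons.inj hcd).1]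
  · obtain ⟨rfl, -⟩ := List.append_inj' (hu.trans (List.append_assoc u (c :: v) [e]).symm) rfl
    have hc : c < D := hw c (by simp)
    have := mul_succ_add_le_of_lt (D := D) (i := u.length) (j := (u ++ c :: v).length) (by simp)
    omega

/-- The sentence expressing `Bracketed (m + 1)` on the traces coding a word. The existentially
quantified trace `1` bounds the length of all the traces of a model, which makes it finite. -/
noncomputable def separatingSentence (p : AP) (m : ℕ) : HFormula AP :=
  .ex 2 (.ex 3 (.ex 1 (.all 0 (.guard (.and (.bracketPair p (m + 1) 2 3) (.bounds p 1 0))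
    (bracketFormula p m 2).not))))

theorem isSigmaSentence_separatingSentence (p : AP) (m : ℕ) :
    IsSigmaSentence (m + 2) (separatingSentence p m) := by
  refine ⟨Set.eq_empty_of_forall_notMem ?_, ?_⟩
  · rintro x ⟨⟨⟨⟨hx, h₀⟩, h₁⟩, h₃⟩, h₂⟩
    have hsub := HFormula.freeVars_guard_subset _ _ hx
    rw [HFormula.freeVars_not, QF.freeVars_and, QF.freeVars_bracketPair, QF.freeVars_bounds] at hsub
    rcases hsub with ((rfl | rfl) | rfl | rfl) | hx
    exacts [h₂ rfl, h₃ rfl, h₁ rfl, h₀ rfl,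
      (freeVars_bracketFormula_subset p m 2 hx).elim h₂ h₃]
  · have h := (altPrefix_bracketFormula p m 2).map_not
    rw [← HFormula.prefixList_not, ← HFormula.prefixList_guard] at h
    exact .cons (.cons (.cons (.of_not (.cons h))))

theorem hModels_separatingSentence_iff {p : AP} {m : ℕ} {T : Set (Trace AP)} :
    HModels T (separatingSentence p m) ↔ ∃ x ∈ T, ∃ y ∈ T, ∃ b ∈ T, ∀ z ∈ T,
      ((QF.bracketPair p (m + 1) 2 3).sat (separatingAsg x y b z) ∧
        (QF.bounds p 1 0).sat (separatingAsg x y b z)) ∧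
      ¬ (bracketFormula p m 2).sat T (separatingAsg x y b z) := by
  have hdisj : Disjoint (bracketFormula p m 2).not.boundVars
      (QF.and (.bracketPair p (m + 1) 2 3) (.bounds p 1 0)).freeVars := by
    refine disjoint_boundVars_not_bracketFormula p m fun x hx => ?_
    rw [QF.freeVars_and, QF.freeVars_bracketPair, QF.freeVars_bounds] at hx
    rcases hx with (rfl | rfl) | rfl | rfl <;> norm_num
  refine exists_congr fun x => and_congr_right fun hx => exists_congr fun y =>
    and_congr_right fun _ => exists_congr fun b => and_congr_right fun _ =>
    forall₂_congr fun z _ => ?_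
  rw [HFormula.sat_guard ⟨x, hx⟩ hdisj, QF.sat_and, HFormula.sat_not, separatingAsg]

theorem finite_of_hModels_separatingSentence {p : AP} {m : ℕ} {T : Set (Trace AP)}
    (h : HModels T (separatingSentence p m)) :
    T.Finite ∧ ∀ t ∈ T, ∃ N, ∀ i, N ≤ i → t i = ∅ := by
  obtain ⟨x, -, y, -, b, hb, h⟩ := hModels_separatingSentence_iff.1 h
  have hbounds (z : Trace AP) (hz : z ∈ T) :
      (∃ j, ∀ k, b (k + j) = ∅) ∧ ∀ j, (z j).Nonempty → ∃ k, (b (k + j)).Nonempty :=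
    QF.sat_bounds.1 (h z hz).1.2
  obtain ⟨N, hN⟩ := (hbounds b hb).1
  have hempty (t : Trace AP) (ht : t ∈ T) (i : ℕ) (hi : N ≤ i) : t i = ∅ := by
    by_contra! hne
    obtain ⟨k, hk⟩ := (hbounds t ht).2 i hne
    have := hN (k + (i - N))
    rw [Nat.add_assoc, Nat.sub_add_cancel hi] at this
    exact hk.ne_empty this
  exact ⟨(finite_setOf_forall_ge_eq N ∅).subset hempty, fun t ht => ⟨N, hempty t ht⟩⟩

theorem hModels_wordTraces_separatingSentence_iff {p : AP} {D m : ℕ} {w : List ℕ}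
    (hw : ∀ x ∈ w, x < D) :
    HModels (wordTraces p D w) (separatingSentence p m) ↔ Bracketed (m + 1) w := by
  rw [hModels_separatingSentence_iff]
  constructor
  · rintro ⟨_, hx, _, ⟨u', e, v', hu', rfl⟩, b, -, h⟩
    obtain ⟨⟨hpair, -⟩, h⟩ := h _ hx
    obtain ⟨u, d, v, hu, rfl⟩ := hx
    rw [QF.sat_bracketPair (separatingAsg_two ..) (separatingAsg_three ..) (hw e (by simp [hu']))]
      at hpair
    obtain ⟨⟨rfl, rfl⟩, hlt⟩ := hpair
    obtain ⟨v, rfl, rfl⟩ := exists_of_length_lt_of_append_cons_eq (hu.symm.trans hu') hlt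
    rw [sat_bracketFormula_iff hw hu (separatingAsg_two ..) (separatingAsg_three ..)] at h
    exact ⟨u, v, v', hu, h⟩
  · rintro ⟨u, v, v', hu, hv⟩
    obtain ⟨b, hb, hbounds⟩ := exists_mem_wordTraces_sat_bounds (p := p) hw (by simp [hu]) 1 0
    refine ⟨_, ⟨u, m + 1, _, hu, rfl⟩, _, ⟨u ++ (m + 1) :: v, m + 1, v', by simp [hu], rfl⟩, b, hb,
      fun z hz => ⟨⟨?_, hbounds _ (separatingAsg_one ..) hz⟩, ?_⟩⟩
    · rw [QF.sat_bracketPair (separatingAsg_two ..) (separatingAsg_three ..) (hw _ (by simp [hu]))]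
      exact ⟨⟨rfl, rfl⟩, by simp⟩
    · rwa [sat_bracketFormula_iff hw hu (separatingAsg_two ..) (separatingAsg_three ..)]

end Finite

end Formulas

theorem hyperltl_alternation_hierarchy_strict_finite_general
    (AP : Type) [Finite AP] [Nonempty AP] (n : ℕ) (hn : 0 < n) :
    ∃ φ : HFormula AP, IsSigmaSentence (n + 1) φ ∧
      (¬ ∃ ψ : HFormula AP, IsSigmaSentence n ψ ∧ ∀ T, HModels T φ ↔ HModels T ψ) ∧
      ∀ T, HModels T φ → T.Finite ∧ ∀ t ∈ T, ∃ m, ∀ i, m ≤ i → t i = (∅ : Set AP) := by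
  cases nonempty_fintype AP
  obtain ⟨p⟩ := ‹Nonempty AP›
  obtain ⟨m, rfl⟩ := Nat.exists_eq_succ_of_ne_zero hn.ne'
  refine ⟨separatingSentence p m, isSigmaSentence_separatingSentence p m, ?_,
    fun _ => finite_of_hModels_separatingSentence⟩
  rintro ⟨ψ, ⟨hψ, hprefix⟩, hequiv⟩
  let N := (3 ^ ψ.prefixList.length + 1) * 2 ^ ψ.prefixList.length
  let D := (m + 1) + ψ.nextDepth + 2
  let u (b : Bool) : List ℕ := bracketWord N b m ++ [m + 1]
  have hu (b : Bool) : ∀ x ∈ u b, x ≤ m + 1 := by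
    simp only [u, List.mem_append, List.mem_singleton]
    rintro x (hx | rfl)
    exacts [(le_of_mem_bracketWord hx).trans m.le_succ, le_rfl]
  have hmodels (b : Bool) : HModels (wordTraces p D ((m + 1) :: u b)) ψ ↔ b = false := by
    rw [← hequiv, hModels_wordTraces_separatingSentence_iff, bracketed_frame_bracketWord_iff]
    have hle : ∀ x ∈ (m + 1) :: u b, x ≤ m + 1 := List.forall_mem_cons.2 ⟨le_rfl, hu b⟩
    exact fun x hx => (hle x hx).trans_lt (by omega)
  have htransfer : PrefixLE ψ.prefixList (u false) (u true) :=
    (prefixLE_bracketWord hprefix le_rfl le_rfl).append (.refl _ _)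
  exact Bool.noConfusion ((hmodels true).1
    (hModels_wordTraces_of_prefixLE hψ le_rfl (hu false) htransfer ((hmodels false).2 rfl)))

/-- **Strictness of the HyperLTL quantifier alternation hierarchy with essentially
finite models**: for every `n > 0` there is a Σ_{n+1}-sentence that is not
equivalent to any Σ_n-sentence and whose models are all finite sets of traces
ending in the suffix `∅^ω`. -/
theorem hyperltl_alternation_hierarchy_strict_finite
    (AP : Type) [Fintype AP] (hAP : 2 ≤ Fintype.card AP) (n : ℕ) (hn : 0 < n) :
    ∃ φ : HFormula AP, IsSigmaSentence (n + 1) φ ∧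
      (¬ ∃ ψ : HFormula AP, IsSigmaSentence n ψ ∧ ∀ T, HModels T φ ↔ HModels T ψ) ∧
      ∀ T, HModels T φ → T.Finite ∧ ∀ t ∈ T, ∃ m, ∀ i, m ≤ i → t i = (∅ : Set AP) := by
  have : Nonempty AP := Fintype.card_pos_iff.1 (by omega)
  exact hyperltl_alternation_hierarchy_strict_finite_general AP n hn
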